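/- Let (Ω, μ) be a standard Borel probability space with an ergodic measure-preserving transformation T : Ω → Ω, and let X be a compact metric space. Let S : Ω × X → Ω × X be of the form S(ω, x) = (Tω, g_ω x), where for μ-a.e. ω, g_ω is a homeomorphism of X, and S is measurable. Let f : Ω × X → ℝ be measurable with f(ω, ·) : X → ℝ continuous for μ-a.e. ω, and with ω ↦ sup_{x ∈ X} |f(ω, x)| integrable. Define f_n(ω, x) := Σ_{i=0}^{n−1} f(S^i(ω, x)) and F_n(ω) := sup_{x ∈ X} f_n(ω, x). Then F_{n+m}(ω) ≤ F_n(ω) + F_m(T^n ω) for a.e. ω and all n, m ≥ 1, so (1/N) F_N(ω) converges for μ-a.e. ω to a constant l; and there exists an S-invariant Borel probability measure η on Ω × X whose projection to Ω equals μ and such that ∫_{Ω × X} f dη ≥ l. -/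

import Mathlib

open MeasureTheory Filter Topology

/-!
Write `F_n(ω)` for the fibrewise supremum of the `n`-th Birkhoff sum of `f` under the skew product
`S`; it is a subadditive cocycle over `T`. Averaging measurable near-maximizers of these sums along
orbits and passing to a weak limit (Krylov–Bogoliubov) yields an `S`-invariant `η` over `μ` with
`inf_n (∫ F_n) / n ≤ ∫ f dη`. This is sharp, and it replaces an appeal to Kingman's theorem: the
upper bound `limsup F_N / N ≤ (∫ F_n) / n` follows for every `n` from subadditivity and Birkhoff's
theorem for `F_n`, while `∫ f dη ≤ liminf F_N / N` follows from the maximal ergodic theorem for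
`(S, η)` and ergodicity of `T`. Hence `F_N / N` converges a.e. to `∫ f dη`.
-/

section MaximalErgodicTheorem

variable {α : Type*} {S : α → α} {f : α → ℝ}

lemma partialSups_birkhoffSum_nonneg (S : α → α) (f : α → ℝ) (n : ℕ) (x : α) :
    0 ≤ partialSups (birkhoffSum S f) n x := by
  simpa using le_partialSups_of_le (birkhoffSum S f) n.zero_le x

lemma partialSups_birkhoffSum_le (S : α → α) (f : α → ℝ) (n : ℕ) (x : α) :
    partialSups (birkhoffSum S f) n x ≤ max 0 (f x + partialSups (birkhoffSum S f) n (S x)) := by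
  rw [Pi.partialSups_apply]
  refine partialSups_le _ _ _ fun k hk => ?_
  cases k with
  | zero => simp
  | succ k =>
    rw [birkhoffSum_succ']
    exact le_max_of_le_right <| add_le_add_right
      (le_partialSups_of_le (birkhoffSum S f) (k.le_succ.trans hk) (S x)) _

lemma iUnion_setOf_partialSups_pos (u : ℕ → α → ℝ) :
    ⋃ n, {x | 0 < partialSups u n x} = {x | ∃ n, 0 < u n x} := by
  ext x
  simp only [Set.mem_iUnion, Set.mem_ofPred_eq, Pi.partialSups_apply]
  constructor
  · rintro ⟨n, hn⟩
    obtain ⟨k, -, hk⟩ := exists_partialSups_eq (fun k => u k x) n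
    exact ⟨k, hk ▸ hn⟩
  · rintro ⟨n, hn⟩
    exact ⟨n, hn.trans_le (le_partialSups (fun k => u k x) n)⟩

variable [MeasurableSpace α] {μ : Measure α}

lemma integral_comp_of_measurePreserving {β : Type*} [MeasurableSpace β] {ν : Measure β}
    {π : α → β} (hπ : MeasurePreserving π μ ν) {h : β → ℝ} (hh : AEStronglyMeasurable h ν) :
    ∫ x, h (π x) ∂μ = ∫ y, h y ∂ν := by
  rw [← hπ.map_eq] at hh ⊢
  exact (integral_map hπ.aemeasurable hh).symm

lemma integrable_birkhoffSum (hS : MeasurePreserving S μ μ) (hf : Integrable f μ) (n : ℕ) :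
    Integrable (birkhoffSum S f n) μ :=
  integrable_finsetSum _ fun i _ => (hS.iterate i).integrable_comp_of_integrable hf

lemma integrable_partialSups {u : ℕ → α → ℝ} (hu : ∀ n, Integrable (u n) μ) (n : ℕ) :
    Integrable (partialSups u n) μ := by
  induction n with
  | zero => simpa using hu 0
  | succ n ih => simpa using ih.sup (hu (n + 1))

/- Where `M n = max_{k ≤ n} S_k f` is positive it is at most `f + M n ∘ S`, while `M n` and
`M n ∘ S` have the same integral. -/
lemma setIntegral_partialSups_birkhoffSum_pos_nonneg (hS : MeasurePreserving S μ μ)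
    (hf : Integrable f μ) (n : ℕ) :
    0 ≤ ∫ x in {x | 0 < partialSups (birkhoffSum S f) n x}, f x ∂μ := by
  set M : α → ℝ := partialSups (birkhoffSum S f) n
  have hM : Integrable M μ := integrable_partialSups (integrable_birkhoffSum hS hf) n
  have hMS : Integrable (fun x => M (S x)) μ := hS.integrable_comp_of_integrable hM
  have hpos : NullMeasurableSet {x | 0 < M x} μ :=
    nullMeasurableSet_lt aemeasurable_const hM.aemeasurable
  have hle : ∀ x, M x - M (S x) ≤ {x | 0 < M x}.indicator f x := by
    intro x
    have hMSx : 0 ≤ M (S x) := partialSups_birkhoffSum_nonneg S f n (S x)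
    simp only [Set.indicator_apply, Set.mem_ofPred_eq]
    split_ifs with hx
    · have := (le_max_iff.1 (partialSups_birkhoffSum_le S f n x)).resolve_left hx.not_ge
      linarith
    · linarith
  calc 0 = ∫ x, (M x - M (S x)) ∂μ := by
        rw [integral_sub hM hMS, integral_comp_of_measurePreserving hS hM.1, sub_self]
    _ ≤ ∫ x, {x | 0 < M x}.indicator f x ∂μ :=
        integral_mono (hM.sub hMS) (hf.indicator₀ hpos) hle
    _ = ∫ x in {x | 0 < M x}, f x ∂μ := integral_indicator₀ hpos

theorem setIntegral_exists_birkhoffSum_pos_nonneg (hS : MeasurePreserving S μ μ)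
    (hf : Integrable f μ) : 0 ≤ ∫ x in {x | ∃ n, 0 < birkhoffSum S f n x}, f x ∂μ := by
  rw [← iUnion_setOf_partialSups_pos]
  refine ge_of_tendsto' (tendsto_setIntegral_of_monotone₀ (fun n => ?_) ?_ hf.integrableOn)
    (setIntegral_partialSups_birkhoffSum_pos_nonneg hS hf)
  · exact nullMeasurableSet_lt aemeasurable_const
      (integrable_partialSups (integrable_birkhoffSum hS hf) n).aemeasurable
  · exact fun m n hmn => Set.ofPred_subset_ofPred.2 fun x hx =>
      hx.trans_le (partialSups_monotone (birkhoffSum S f) hmn x)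

end MaximalErgodicTheorem

section SubadditiveCocycle

lemma ae_tendsto_of_forall_eventually {α ι : Type*} [MeasurableSpace α] {μ : Measure α}
    {l : Filter ι} {v : ι → α → ℝ} {L : ℝ}
    (hlower : ∀ c < L, ∀ᵐ x ∂μ, ∀ᶠ i in l, c < v i x)
    (hupper : ∀ c, L < c → ∀ᵐ x ∂μ, ∀ᶠ i in l, v i x < c) :
    ∀ᵐ x ∂μ, Tendsto (v · x) l (𝓝 L) := by
  have hlower' : ∀ᵐ x ∂μ, ∀ q : ℚ, (q : ℝ) < L → ∀ᶠ i in l, (q : ℝ) < v i x :=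
    ae_all_iff.2 fun q => eventually_imp_distrib_left.2 (hlower q)
  have hupper' : ∀ᵐ x ∂μ, ∀ q : ℚ, L < q → ∀ᶠ i in l, v i x < q :=
    ae_all_iff.2 fun q => eventually_imp_distrib_left.2 (hupper q)
  filter_upwards [hlower', hupper'] with x hxl hxu
  refine tendsto_order.2 ⟨fun c hc => ?_, fun c hc => ?_⟩
  · obtain ⟨q, hcq, hqL⟩ := exists_rat_btwn hc
    exact (hxl q hqL).mono fun i hi => hcq.trans hi
  · obtain ⟨q, hLq, hqc⟩ := exists_rat_btwn hc
    exact (hxu q hLq).mono fun i hi => hi.trans hqc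

lemma eventually_lt_div_of_bddBelow_sub {a : ℕ → ℝ} {c d : ℝ}
    (ha : BddBelow (Set.range fun n : ℕ => a n - n * d)) (hcd : c < d) :
    ∀ᶠ n : ℕ in atTop, c < a n / n := by
  obtain ⟨B, hB⟩ := ha
  have hsmall : Tendsto (fun n : ℕ => B / n) atTop (𝓝 0) :=
    tendsto_const_nhds.div_atTop tendsto_natCast_atTop_atTop
  filter_upwards [hsmall.eventually_const_lt (sub_neg.2 hcd), eventually_gt_atTop 0] with n hn hn0
  have hn0' : (0 : ℝ) < n := Nat.cast_pos.2 hn0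
  have hBn : B ≤ a n - n * d := hB ⟨n, rfl⟩
  rw [lt_div_iff₀ hn0'] at hn ⊢
  linarith

lemma tendsto_succ_sub_div_of_tendsto_div {a : ℕ → ℝ} {L : ℝ}
    (ha : Tendsto (fun n : ℕ => a n / n) atTop (𝓝 L)) :
    Tendsto (fun n : ℕ => (a (n + 1) - a n) / n) atTop (𝓝 0) := by
  have hsucc : Tendsto (fun n : ℕ => a (n + 1) / (n + 1 : ℕ) / (n / (n + 1))) atTop (𝓝 (L / 1)) :=
    (ha.comp (tendsto_add_atTop_nat 1)).div (tendsto_natCast_div_add_atTop 1) one_ne_zero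
  have hdiff := hsucc.sub ha
  rw [div_one, sub_self] at hdiff
  refine hdiff.congr' ?_
  filter_upwards [eventually_gt_atTop 0] with n hn
  have hn' : (n : ℝ) ≠ 0 := Nat.cast_ne_zero.2 hn.ne'
  push_cast
  field_simp

variable {Ω : Type*} {T : Ω → Ω} {u : ℕ → Ω → ℝ} {ω : Ω}

lemma sum_range_add_le_of_subadditive
    (hu : ∀ m n, u (m + n) ω ≤ u m ω + u n (T^[m] ω)) (n N : ℕ) :
    ∑ i ∈ Finset.range n, u (N + i) ω ≤
      ∑ i ∈ Finset.range n, u i ω + birkhoffSum T (u n) N ω := by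
  induction N with
  | zero => simp
  | succ N ih =>
    have hshift : ∑ i ∈ Finset.range n, u (N + 1 + i) ω =
        ∑ i ∈ Finset.range n, u (N + i) ω + u (N + n) ω - u N ω := by
      have h := Finset.sum_range_succ' (fun i => u (N + i) ω) n
      rw [Finset.sum_range_succ] at h
      simp only [add_assoc, add_comm 1, add_zero] at h ⊢
      linarith
    rw [birkhoffSum_succ, hshift]
    linarith [hu N n]

/- Average `u (N + n) ≤ u (N + i) + u (n - i) ∘ T^[N + i]` over `i < n`. -/
lemma mul_le_birkhoffSum_of_subadditive
    (hu : ∀ m n, u (m + n) ω ≤ u m ω + u n (T^[m] ω)) (n N : ℕ) :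
    n * u (N + n) ω ≤ ∑ i ∈ Finset.range n, u i ω + birkhoffSum T (u n) N ω +
      ∑ i ∈ Finset.range n, u (n - i) (T^[i] (T^[N] ω)) := by
  have hterm : ∀ i ∈ Finset.range n,
      u (N + n) ω ≤ u (N + i) ω + u (n - i) (T^[i] (T^[N] ω)) := by
    intro i hi
    have h := hu (N + i) (n - i)
    rwa [add_assoc, Nat.add_sub_cancel' (Finset.mem_range.1 hi).le, add_comm N i,
      Function.iterate_add_apply, add_comm i N] at h
  calc n * u (N + n) ω = ∑ _i ∈ Finset.range n, u (N + n) ω := by simp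
    _ ≤ ∑ i ∈ Finset.range n, u (N + i) ω +
          ∑ i ∈ Finset.range n, u (n - i) (T^[i] (T^[N] ω)) := by
        rw [← Finset.sum_add_distrib]
        exact Finset.sum_le_sum hterm
    _ ≤ _ := add_le_add_left (sum_range_add_le_of_subadditive hu n N) _

variable [MeasurableSpace Ω] {μ : Measure Ω}

/-- An integrable subadditive cocycle over `T`, the setting of Kingman's ergodic theorem. -/
structure IsSubadditiveCocycle (T : Ω → Ω) (μ : Measure Ω) (u : ℕ → Ω → ℝ) : Prop where
  integrable : ∀ n, Integrable (u n) μ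
  ae_add_le : ∀ m n, ∀ᵐ ω ∂μ, u (m + n) ω ≤ u m ω + u n (T^[m] ω)

lemma isSubadditiveCocycle_birkhoffSum (hT : MeasurePreserving T μ μ) {h : Ω → ℝ}
    (hh : Integrable h μ) : IsSubadditiveCocycle T μ (birkhoffSum T h) where
  integrable := integrable_birkhoffSum hT hh
  ae_add_le m n := .of_forall fun ω => (birkhoffSum_add T h m n ω).le

lemma nullMeasurableSet_bddBelow_range {v : ℕ → Ω → ℝ} (hv : ∀ n, AEMeasurable (v n) μ) :
    NullMeasurableSet {ω | BddBelow (Set.range (v · ω))} μ := by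
  have hset : {ω | BddBelow (Set.range (v · ω))} = ⋃ k : ℕ, ⋂ n, {ω | -(k : ℝ) ≤ v n ω} := by
    ext ω
    simp only [Set.mem_ofPred_eq, Set.mem_iUnion, Set.mem_iInter, bddBelow_def,
      Set.forall_mem_range]
    constructor
    · rintro ⟨B, hB⟩
      obtain ⟨k, hk⟩ := exists_nat_ge (-B)
      exact ⟨k, fun n => (neg_le.1 hk).trans (hB n)⟩
    · rintro ⟨k, hk⟩
      exact ⟨-k, hk⟩
  rw [hset]
  exact .iUnion fun k => .iInter fun n => nullMeasurableSet_le aemeasurable_const (hv n)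

namespace IsSubadditiveCocycle

lemma ae_bddBelow_sub_or_ae_not [IsFiniteMeasure μ] (hu : IsSubadditiveCocycle T μ u)
    (hT : Ergodic T μ) (c : ℝ) :
    (∀ᵐ ω ∂μ, BddBelow (Set.range fun n : ℕ => u n ω - n * c)) ∨
      ∀ᵐ ω ∂μ, ¬BddBelow (Set.range fun n : ℕ => u n ω - n * c) := by
  set E : Set Ω := {ω | BddBelow (Set.range fun n : ℕ => u n ω - n * c)}
  have hE : NullMeasurableSet E μ := nullMeasurableSet_bddBelow_range fun n =>
    (hu.integrable n).aemeasurable.sub_const _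
  have hET : E ≤ᵐ[μ] T ⁻¹' E := by
    filter_upwards [ae_all_iff.2 (hu.ae_add_le 1)] with ω hω ⟨B, hB⟩
    refine ⟨B + c - u 1 ω, ?_⟩
    rintro _ ⟨n, rfl⟩
    have hBn : B ≤ u (1 + n) ω - (1 + n : ℕ) * c := hB ⟨1 + n, rfl⟩
    have hsub : u (1 + n) ω ≤ u 1 ω + u n (T ω) := hω n
    push_cast at hBn
    simp only
    linarith
  rcases hT.ae_empty_or_univ_of_ae_le_preimage hE hET with h | h
  · exact .inr (eventuallyEq_empty.1 h)
  · exact .inl (eventuallyEq_univ.1 h)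

variable {α : Type*} [MeasurableSpace α] {η : Measure α} [IsProbabilityMeasure η]
  {S : α → α} {π : α → Ω} {φ : α → ℝ} {c : ℝ}

/- Otherwise `u n - n * c` is a.e. unbounded below, hence some Birkhoff sum of `c - φ` is positive
a.e., and the maximal ergodic theorem gives `∫ φ ≤ c`. -/
lemma ae_bddBelow_sub (hu : IsSubadditiveCocycle T μ u) (hT : Ergodic T μ)
    (hS : MeasurePreserving S η η) (hπ : MeasurePreserving π η μ) (hφ : Integrable φ η)
    (hφu : ∀ n, ∀ᵐ p ∂η, birkhoffSum S φ n p ≤ u n (π p)) (hc : c < ∫ p, φ p ∂η) :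
    ∀ᵐ ω ∂μ, BddBelow (Set.range fun n : ℕ => u n ω - n * c) := by
  have : IsProbabilityMeasure μ := hπ.map_eq ▸ Measure.isProbabilityMeasure_map hπ.aemeasurable
  refine (hu.ae_bddBelow_sub_or_ae_not hT c).resolve_right fun hunbdd => hc.not_ge ?_
  have hpos : ∀ᵐ p ∂η, ∃ n, 0 < birkhoffSum S (fun q => c - φ q) n p := by
    filter_upwards [hπ.quasiMeasurePreserving.ae hunbdd, ae_all_iff.2 hφu] with p hp hφp
    obtain ⟨_, ⟨n, rfl⟩, hn⟩ := not_bddBelow_iff.1 hp 0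
    have hsum : birkhoffSum S (fun q => c - φ q) n p = n * c - birkhoffSum S φ n p := by
      simp [birkhoffSum, Finset.sum_sub_distrib]
    exact ⟨n, by linarith [hφp n]⟩
  have hmax : 0 ≤ ∫ p in {p | ∃ n, 0 < birkhoffSum S (fun q => c - φ q) n p}, (c - φ p) ∂η :=
    setIntegral_exists_birkhoffSum_pos_nonneg hS ((integrable_const c).sub hφ)
  rw [setIntegral_congr_set (eventuallyEq_univ.2 hpos), setIntegral_univ] at hmax
  simpa [integral_sub (integrable_const c) hφ] using hmax

theorem ae_eventually_lt_div (hu : IsSubadditiveCocycle T μ u) (hT : Ergodic T μ)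
    (hS : MeasurePreserving S η η) (hπ : MeasurePreserving π η μ) (hφ : Integrable φ η)
    (hφu : ∀ n, ∀ᵐ p ∂η, birkhoffSum S φ n p ≤ u n (π p)) (hc : c < ∫ p, φ p ∂η) :
    ∀ᵐ ω ∂μ, ∀ᶠ n : ℕ in atTop, c < u n ω / n := by
  obtain ⟨d, hcd, hd⟩ := exists_between hc
  filter_upwards [hu.ae_bddBelow_sub hT hS hπ hφ hφu hd] with ω hω
  exact eventually_lt_div_of_bddBelow_sub hω hcd

end IsSubadditiveCocycle

variable [IsProbabilityMeasure μ] {h : Ω → ℝ}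

theorem ae_tendsto_birkhoffSum_div (hT : Ergodic T μ) (hh : Integrable h μ) :
    ∀ᵐ ω ∂μ, Tendsto (fun n : ℕ => birkhoffSum T h n ω / n) atTop (𝓝 (∫ ω, h ω ∂μ)) := by
  have hTμ := hT.toMeasurePreserving
  have hlower : ∀ {k : Ω → ℝ} {c : ℝ}, Integrable k μ → c < ∫ ω, k ω ∂μ →
      ∀ᵐ ω ∂μ, ∀ᶠ n : ℕ in atTop, c < birkhoffSum T k n ω / n := fun hk =>
    (isSubadditiveCocycle_birkhoffSum hTμ hk).ae_eventually_lt_div hT hTμ (.id μ) hk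
      fun _ => .of_forall fun _ => le_rfl
  refine ae_tendsto_of_forall_eventually (fun c => hlower hh) fun c hc => ?_
  have hneg : -c < ∫ ω, (-h) ω ∂μ := by simpa [integral_neg] using hc
  filter_upwards [hlower hh.neg hneg] with ω hω
  exact hω.mono fun n hn => by simpa [birkhoffSum_neg, neg_div] using hn

lemma ae_tendsto_iterate_div (hT : Ergodic T μ) (hh : Integrable h μ) :
    ∀ᵐ ω ∂μ, Tendsto (fun n : ℕ => h (T^[n] ω) / n) atTop (𝓝 0) := by
  filter_upwards [ae_tendsto_birkhoffSum_div hT hh] with ω hω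
  simpa [birkhoffSum_succ] using tendsto_succ_sub_div_of_tendsto_div hω

namespace IsSubadditiveCocycle

theorem ae_eventually_div_lt (hu : IsSubadditiveCocycle T μ u) (hT : Ergodic T μ) {n : ℕ}
    (hn : 0 < n) {c : ℝ} (hc : (∫ ω, u n ω ∂μ) / n < c) :
    ∀ᵐ ω ∂μ, ∀ᶠ N : ℕ in atTop, u N ω / N < c := by
  set h : Ω → ℝ := fun ω => ∑ i ∈ Finset.range n, u (n - i) (T^[i] ω)
  have hh : Integrable h μ := integrable_finsetSum _ fun i _ =>
    (hT.toMeasurePreserving.iterate i).integrable_comp_of_integrable (hu.integrable (n - i))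
  have hn' : (0 : ℝ) < n := Nat.cast_pos.2 hn
  filter_upwards [ae_tendsto_birkhoffSum_div hT (hu.integrable n), ae_tendsto_iterate_div hT hh,
    ae_all_iff.2 fun m => ae_all_iff.2 (hu.ae_add_le m)] with ω hbirkhoff herror hsub
  set C : ℝ := ∑ i ∈ Finset.range n, u i ω - n * n * c
  have hconst : Tendsto (fun N : ℕ => C / N) atTop (𝓝 0) :=
    tendsto_const_nhds.div_atTop tendsto_natCast_atTop_atTop
  have hlim := (hconst.add hbirkhoff).add herror
  rw [zero_add, add_zero] at hlim
  suffices ∀ᶠ N in atTop, u (N + n) ω / (N + n : ℕ) < c by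
    rwa [← map_add_atTop_eq_nat n, eventually_map]
  filter_upwards [hlim.eventually_lt_const ((div_lt_iff₀ hn').1 hc), eventually_gt_atTop 0]
    with N hN hN0
  have hN0' : (0 : ℝ) < N := Nat.cast_pos.2 hN0
  rw [← add_div, ← add_div, div_lt_iff₀ hN0'] at hN
  have hkey := mul_le_birkhoffSum_of_subadditive hsub n N
  rw [div_lt_iff₀ (by positivity), ← mul_lt_mul_iff_right₀ hn']
  push_cast
  calc n * u (N + n) ω ≤ _ := hkey
    _ < n * (c * (N + n)) := by linarith

theorem ae_tendsto_div (hu : IsSubadditiveCocycle T μ u) (hT : Ergodic T μ)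
    {α : Type*} [MeasurableSpace α] {η : Measure α} [IsProbabilityMeasure η] {S : α → α}
    {π : α → Ω} {φ : α → ℝ} (hS : MeasurePreserving S η η) (hπ : MeasurePreserving π η μ)
    (hφ : Integrable φ η) (hφu : ∀ n, ∀ᵐ p ∂η, birkhoffSum S φ n p ≤ u n (π p))
    (hsharp : ∀ c, ∫ p, φ p ∂η < c → ∃ n : ℕ, 0 < n ∧ (∫ ω, u n ω ∂μ) / n < c) :
    ∀ᵐ ω ∂μ, Tendsto (fun n : ℕ => u n ω / n) atTop (𝓝 (∫ p, φ p ∂η)) := by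
  refine ae_tendsto_of_forall_eventually
    (fun c hc => hu.ae_eventually_lt_div hT hS hπ hφ hφu hc) fun c hc => ?_
  obtain ⟨n, hn, hnc⟩ := hsharp c hc
  exact hu.ae_eventually_div_lt hT hn hnc

end IsSubadditiveCocycle

end SubadditiveCocycle

section CaratheodoryIntegrand

open TopologicalSpace
open scoped BoundedContinuousFunction

lemma measurable_continuousMap_of_forall_eval {Ω X : Type*} [MeasurableSpace Ω]
    [TopologicalSpace X] [CompactSpace X] [T2Space X] [SecondCountableTopology X]
    [MeasurableSpace C(X, ℝ)] [BorelSpace C(X, ℝ)] {Φ : Ω → C(X, ℝ)}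
    (hΦ : ∀ x, Measurable fun ω => Φ ω x) : Measurable Φ := by
  cases isEmpty_or_nonempty X
  · exact measurable_of_subsingleton_codomain Φ
  have hemb : MeasurableEmbedding fun (v : C(X, ℝ)) (k : ℕ) => v (denseSeq X k) := by
    refine (continuous_pi fun k => continuous_eval_const _).measurableEmbedding fun v w hvw => ?_
    exact ContinuousMap.coe_injective
      ((denseRange_denseSeq X).equalizer v.continuous w.continuous hvw)
  exact hemb.measurable_comp_iff.1 (measurable_pi_lambda _ fun k => hΦ _)

variable {Ω X : Type*} [MeasurableSpace Ω] [TopologicalSpace X] [MeasurableSpace X]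
  {μ : Measure Ω} {φ ψ : Ω × X → ℝ}

/-- A Carathéodory integrand over `μ`: a jointly measurable function on `Ω × X` that is continuous
on almost every fibre. Unlike in some texts, domination by an integrable function of the base point
is part of the definition, so that `φ` is integrable for every measure with marginal `μ`. -/
structure IsCaratheodoryIntegrand (μ : Measure Ω) (φ : Ω × X → ℝ) : Prop where
  measurable : Measurable φ
  ae_continuous : ∀ᵐ ω ∂μ, Continuous fun x => φ (ω, x)
  exists_bound : ∃ b : Ω → ℝ, Integrable b μ ∧ ∀ᵐ ω ∂μ, ∀ x, |φ (ω, x)| ≤ b ω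

lemma isCaratheodoryIntegrand_boundedContinuousFunction [TopologicalSpace Ω]
    [OpensMeasurableSpace (Ω × X)] [IsFiniteMeasure μ] (ψ : Ω × X →ᵇ ℝ) :
    IsCaratheodoryIntegrand μ ψ where
  measurable := ψ.continuous.measurable
  ae_continuous := .of_forall fun ω => by fun_prop
  exists_bound := ⟨fun _ => ‖ψ‖, integrable_const _, .of_forall fun _ _ => ψ.norm_coe_le_norm _⟩

lemma isCaratheodoryIntegrand_of_integrable_iSup_abs [CompactSpace X] (hmeas : Measurable φ)
    (hcont : ∀ᵐ ω ∂μ, Continuous fun x => φ (ω, x))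
    (hint : Integrable (fun ω => ⨆ x, |φ (ω, x)|) μ) : IsCaratheodoryIntegrand μ φ where
  measurable := hmeas
  ae_continuous := hcont
  exists_bound := by
    refine ⟨_, hint, hcont.mono fun ω hω x => ?_⟩
    exact le_ciSup (f := fun y => |φ (ω, y)|) (isCompact_range hω.abs).bddAbove x

namespace IsCaratheodoryIntegrand

lemma zero : IsCaratheodoryIntegrand μ (0 : Ω × X → ℝ) where
  measurable := measurable_zero
  ae_continuous := .of_forall fun _ => continuous_const
  exists_bound := ⟨0, integrable_zero _ _ _, .of_forall fun _ _ => by simp⟩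

lemma add (hφ : IsCaratheodoryIntegrand μ φ) (hψ : IsCaratheodoryIntegrand μ ψ) :
    IsCaratheodoryIntegrand μ (φ + ψ) where
  measurable := hφ.measurable.add hψ.measurable
  ae_continuous := by
    filter_upwards [hφ.ae_continuous, hψ.ae_continuous] with ω hφω hψω using hφω.add hψω
  exists_bound := by
    obtain ⟨b, hb, hφb⟩ := hφ.exists_bound
    obtain ⟨c, hc, hψc⟩ := hψ.exists_bound
    refine ⟨b + c, hb.add hc, ?_⟩
    filter_upwards [hφb, hψc] with ω hφω hψω x
    exact (abs_add_le _ _).trans (add_le_add (hφω x) (hψω x))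

lemma integrable (hφ : IsCaratheodoryIntegrand μ φ) {η : Measure (Ω × X)} (hη : η.fst = μ) :
    Integrable φ η := by
  obtain ⟨b, hb, hφb⟩ := hφ.exists_bound
  have hfst : MeasurePreserving Prod.fst η μ := ⟨measurable_fst, hη⟩
  refine (hfst.integrable_comp_of_integrable hb).mono' hφ.measurable.aestronglyMeasurable ?_
  filter_upwards [hfst.quasiMeasurePreserving.ae hφb] with p hp using hp p.2

lemma ae_le_iSup [CompactSpace X] (hφ : IsCaratheodoryIntegrand μ φ) :
    ∀ᵐ ω ∂μ, ∀ x, φ (ω, x) ≤ ⨆ y, φ (ω, y) := by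
  filter_upwards [hφ.ae_continuous] with ω hω x
  exact le_ciSup (f := fun y => φ (ω, y)) (isCompact_range hω).bddAbove x

section Supremum

variable [SeparableSpace X] [Nonempty X]

lemma measurable_iSup_denseSeq (hφ : IsCaratheodoryIntegrand μ φ) :
    Measurable fun ω => ⨆ k, φ (ω, denseSeq X k) :=
  .iSup fun _ => hφ.measurable.comp measurable_prodMk_right

variable [CompactSpace X]

lemma ae_iSup_eq_iSup_denseSeq (hφ : IsCaratheodoryIntegrand μ φ) :
    ∀ᵐ ω ∂μ, ⨆ x, φ (ω, x) = ⨆ k, φ (ω, denseSeq X k) := by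
  filter_upwards [hφ.ae_continuous] with ω hω
  rw [← (denseRange_denseSeq X).ciSup hω (isCompact_range hω).bddAbove]
  exact iSup_range' (fun x => φ (ω, x)) _

lemma integrable_iSup (hφ : IsCaratheodoryIntegrand μ φ) :
    Integrable (fun ω => ⨆ x, φ (ω, x)) μ := by
  obtain ⟨b, hb, hφb⟩ := hφ.exists_bound
  refine hb.mono' ⟨_, hφ.measurable_iSup_denseSeq.stronglyMeasurable,
    hφ.ae_iSup_eq_iSup_denseSeq⟩ ?_
  filter_upwards [hφb, hφ.ae_le_iSup] with ω hbω hsup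
  let x : X := Classical.arbitrary X
  exact abs_le.2 ⟨(abs_le.1 (hbω x)).1.trans (hsup x), ciSup_le fun y => (abs_le.1 (hbω y)).2⟩

/- Select the first point of a dense sequence that comes within `ε` of the supremum. -/
lemma exists_measurable_iSup_sub_lt (hφ : IsCaratheodoryIntegrand μ φ) {ε : ℝ} (hε : 0 < ε) :
    ∃ s : Ω → X, Measurable s ∧ ∀ᵐ ω ∂μ, (⨆ x, φ (ω, x)) - ε < φ (ω, s ω) := by
  classical
  have hex : ∀ ω, ∃ k, (⨆ k, φ (ω, denseSeq X k)) - ε < φ (ω, denseSeq X k) := fun ω =>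
    exists_lt_of_lt_ciSup (sub_lt_self _ hε)
  refine ⟨fun ω => denseSeq X (Nat.find (hex ω)), ?_, ?_⟩
  · exact measurable_from_nat.comp <| measurable_find hex fun k =>
      measurableSet_lt (hφ.measurable_iSup_denseSeq.sub_const ε)
        (hφ.measurable.comp measurable_prodMk_right)
  · filter_upwards [hφ.ae_iSup_eq_iSup_denseSeq] with ω hω
    rw [hω]
    exact Nat.find_spec (hex ω)

lemma exists_measure_integral_iSup_sub_le [IsProbabilityMeasure μ]
    (hφ : IsCaratheodoryIntegrand μ φ) {ε : ℝ} (hε : 0 < ε) :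
    ∃ ν : Measure (Ω × X), IsProbabilityMeasure ν ∧ ν.fst = μ ∧
      ∫ ω, ⨆ x, φ (ω, x) ∂μ - ε ≤ ∫ p, φ p ∂ν := by
  obtain ⟨s, hs, hφs⟩ := hφ.exists_measurable_iSup_sub_lt hε
  have hgraph : Measurable fun ω => (ω, s ω) := measurable_id.prodMk hs
  have hfst : (μ.map fun ω => (ω, s ω)).fst = μ :=
    (Measure.fst_map_prodMk hs).trans Measure.map_id
  refine ⟨_, Measure.isProbabilityMeasure_map hgraph.aemeasurable, hfst, ?_⟩
  calc ∫ ω, ⨆ x, φ (ω, x) ∂μ - ε = ∫ ω, ((⨆ x, φ (ω, x)) - ε) ∂μ := by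
        simp [integral_sub hφ.integrable_iSup (integrable_const ε)]
    _ ≤ ∫ ω, φ (ω, s ω) ∂μ :=
        integral_mono_ae (hφ.integrable_iSup.sub (integrable_const ε))
          ((hφ.integrable hfst).comp_measurable hgraph) (hφs.mono fun _ => le_of_lt)
    _ = ∫ p, φ p ∂(μ.map fun ω => (ω, s ω)) :=
        (integral_map hgraph.aemeasurable hφ.measurable.aestronglyMeasurable).symm

end Supremum

section WeakConvergence

variable [CompactSpace X] [T2Space X] [SecondCountableTopology X]

lemma exists_integrable_continuousMap (hφ : IsCaratheodoryIntegrand μ φ) :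
    ∃ Φ : Ω → C(X, ℝ), Integrable Φ μ ∧ ∀ᵐ ω ∂μ, ∀ x, Φ ω x = φ (ω, x) := by
  classical
  obtain ⟨A, hA, hAm, hA0⟩ := exists_measurable_superset_of_null (ae_iff.1 hφ.ae_continuous)
  have hcont : ∀ ω, Continuous fun x => if ω ∈ A then (0 : ℝ) else φ (ω, x) := by
    intro ω
    split_ifs with hω
    · exact continuous_const
    · exact not_not.1 fun hdisc => hω (hA hdisc)
  let Φ : Ω → C(X, ℝ) := fun ω => ⟨_, hcont ω⟩
  have hΦφ : ∀ᵐ ω ∂μ, ∀ x, Φ ω x = φ (ω, x) := by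
    filter_upwards [measure_eq_zero_iff_ae_notMem.1 hA0] with ω hω x using if_neg hω
  borelize C(X, ℝ)
  have hΦ : Measurable Φ := measurable_continuousMap_of_forall_eval fun x =>
    Measurable.ite hAm measurable_const (hφ.measurable.comp measurable_prodMk_right)
  obtain ⟨b, hb, hφb⟩ := hφ.exists_bound
  refine ⟨Φ, hb.mono hΦ.aestronglyMeasurable ?_, hΦφ⟩
  filter_upwards [hφb, hΦφ] with ω hbω hΦω
  refine (ContinuousMap.norm_le _ (norm_nonneg _)).2 fun x => ?_
  rw [hΦω, Real.norm_eq_abs]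
  exact (hbω x).trans (le_abs_self _)

variable [TopologicalSpace Ω] [PseudoMetrizableSpace Ω] [BorelSpace Ω] [BorelSpace X]
  [IsFiniteMeasure μ]

lemma exists_boundedContinuousFunction_integral_sub_le (hφ : IsCaratheodoryIntegrand μ φ) {ε : ℝ}
    (hε : 0 < ε) :
    ∃ ψ : Ω × X →ᵇ ℝ, ∀ η : Measure (Ω × X), [IsFiniteMeasure η] → η.fst = μ →
      dist (∫ p, φ p ∂η) (∫ p, ψ p ∂η) ≤ ε := by
  obtain ⟨Φ, hΦ, hΦφ⟩ := hφ.exists_integrable_continuousMap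
  obtain ⟨Ψ, hΨ, hΨint⟩ := hΦ.exists_boundedContinuous_integral_sub_le hε
  have hbound : ∀ p : Ω × X, ‖Ψ p.1 p.2‖ ≤ ‖Ψ‖ := fun p =>
    ((Ψ p.1).norm_coe_le_norm p.2).trans (Ψ.norm_coe_le_norm p.1)
  let ψ : Ω × X →ᵇ ℝ := .ofNormedAddCommGroup (fun p => Ψ p.1 p.2) (by fun_prop) ‖Ψ‖ hbound
  refine ⟨ψ, fun η _ hη => ?_⟩
  have hfst : MeasurePreserving Prod.fst η μ := ⟨measurable_fst, hη⟩
  have hdiff : Integrable (fun ω => ‖Φ ω - Ψ ω‖) μ := (hΦ.sub hΨint).norm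
  calc dist (∫ p, φ p ∂η) (∫ p, ψ p ∂η) = ‖∫ p, (φ p - ψ p) ∂η‖ := by
        rw [dist_eq_norm, integral_sub (hφ.integrable hη) (ψ.integrable _)]
    _ ≤ ∫ p, ‖Φ p.1 - Ψ p.1‖ ∂η := by
        refine norm_integral_le_of_norm_le (hfst.integrable_comp_of_integrable hdiff) ?_
        filter_upwards [hfst.quasiMeasurePreserving.ae hΦφ] with p hp
        rw [← hp p.2]
        exact (Φ p.1 - Ψ p.1).norm_coe_le_norm p.2
    _ = ∫ ω, ‖Φ ω - Ψ ω‖ ∂μ := integral_comp_of_measurePreserving hfst hdiff.1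
    _ ≤ ε := hΨ

lemma tendsto_integral (hφ : IsCaratheodoryIntegrand μ φ) {ι : Type*} {l : Filter ι}
    {ηs : ι → ProbabilityMeasure (Ω × X)} {η : ProbabilityMeasure (Ω × X)}
    (hlim : Tendsto ηs l (𝓝 η)) (hηs : ∀ i, (ηs i : Measure (Ω × X)).fst = μ)
    (hη : (η : Measure (Ω × X)).fst = μ) :
    Tendsto (fun i => ∫ p, φ p ∂(ηs i : Measure (Ω × X))) l
      (𝓝 (∫ p, φ p ∂(η : Measure (Ω × X)))) := by
  refine Metric.tendsto_nhds.2 fun ε hε => ?_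
  obtain ⟨ψ, hψ⟩ := hφ.exists_boundedContinuousFunction_integral_sub_le
    (show 0 < ε / 3 by positivity)
  have hψlim := ProbabilityMeasure.tendsto_iff_forall_integral_tendsto.1 hlim ψ
  filter_upwards [Metric.tendsto_nhds.1 hψlim (ε / 3) (by positivity)] with i hi
  calc dist (∫ p, φ p ∂(ηs i : Measure (Ω × X))) (∫ p, φ p ∂(η : Measure (Ω × X)))
      ≤ _ := dist_triangle4_right _ _ (∫ p, ψ p ∂(ηs i : Measure (Ω × X)))
        (∫ p, ψ p ∂(η : Measure (Ω × X)))
    _ < ε := by linarith [hψ _ (hηs i), hψ _ hη]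

end WeakConvergence

end IsCaratheodoryIntegrand

end CaratheodoryIntegrand

section OrbitAverage

variable {α β : Type*} [MeasurableSpace α] [MeasurableSpace β] {S : α → α} {T : β → β}
  {ν : Measure α} {f : α → ℝ} {N : ℕ}

/-- The average of the push-forwards of `ν` under the first `N` iterates of `S`, as in the
Krylov–Bogoliubov construction of invariant measures; it is the zero measure for `N = 0`. -/
noncomputable def orbitAverage (S : α → α) (ν : Measure α) (N : ℕ) : Measure α :=
  (N : ENNReal)⁻¹ • ∑ i ∈ Finset.range N, ν.map S^[i]

lemma map_orbitAverage {π : α → β} (hS : Measurable S) (hT : Measurable T) (hπ : Measurable π)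
    (hπST : Function.Semiconj π S T) :
    (orbitAverage S ν N).map π = orbitAverage T (ν.map π) N := by
  rw [orbitAverage, orbitAverage, Measure.map_smul, Measure.map_finset_sum hπ.aemeasurable]
  congr 1
  refine Finset.sum_congr rfl fun i _ => ?_
  rw [Measure.map_map hπ (hS.iterate i), Measure.map_map (hT.iterate i) hπ,
    (hπST.iterate_right i).comp_eq]

lemma orbitAverage_eq_self (hS : MeasurePreserving S ν ν) (hN : N ≠ 0) :
    orbitAverage S ν N = ν := by
  simp only [orbitAverage, (hS.iterate _).map_eq, Finset.sum_const, Finset.card_range]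
  rw [← Nat.cast_smul_eq_nsmul ENNReal, smul_smul,
    ENNReal.inv_mul_cancel (Nat.cast_ne_zero.2 hN) (ENNReal.natCast_ne_top N), one_smul]

lemma isProbabilityMeasure_orbitAverage (hS : Measurable S) [IsProbabilityMeasure ν] (hN : N ≠ 0) :
    IsProbabilityMeasure (orbitAverage S ν N) := by
  have hmap : ∀ i, ν.map S^[i] Set.univ = 1 := fun i => by
    rw [Measure.map_apply (hS.iterate i) .univ, Set.preimage_univ, measure_univ]
  constructor
  simp only [orbitAverage, Measure.smul_apply, Measure.finsetSum_apply, hmap, Finset.sum_const,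
    Finset.card_range, nsmul_eq_mul, mul_one, smul_eq_mul]
  exact ENNReal.inv_mul_cancel (Nat.cast_ne_zero.2 hN) (ENNReal.natCast_ne_top N)

lemma integral_orbitAverage (hS : Measurable S) (hf : ∀ i, Integrable f (ν.map S^[i])) :
    ∫ x, f x ∂(orbitAverage S ν N) = (∫ x, birkhoffSum S f N x ∂ν) / N := by
  have hterm : ∀ i, ∫ x, f x ∂(ν.map S^[i]) = ∫ x, f (S^[i] x) ∂ν := fun i =>
    integral_map (hS.iterate i).aemeasurable (hf i).1
  have hsum : ∫ x, birkhoffSum S f N x ∂ν = ∑ i ∈ Finset.range N, ∫ x, f (S^[i] x) ∂ν :=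
    integral_finsetSum _ fun i _ => (hf i).comp_measurable (hS.iterate i)
  rw [orbitAverage, integral_smul_measure, integral_finsetSum_measure fun i _ => hf i, hsum]
  simp [hterm, div_eq_inv_mul]

lemma norm_integral_comp_sub_integral_orbitAverage_le [IsProbabilityMeasure ν] (hS : Measurable S)
    {ψ : α → ℝ} (hψ : Measurable ψ) {C : ℝ} (hC : ∀ x, ‖ψ x‖ ≤ C) :
    ‖∫ x, ψ (S x) ∂(orbitAverage S ν N) - ∫ x, ψ x ∂(orbitAverage S ν N)‖ ≤ 2 * C / N := by
  have hint : ∀ {φ : α → ℝ}, Measurable φ → (∀ x, ‖φ x‖ ≤ C) →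
      ∀ i, Integrable φ (ν.map S^[i]) := fun hφ hφC i =>
    have := Measure.isProbabilityMeasure_map (μ := ν) (hS.iterate i).aemeasurable
    .of_bound hφ.aestronglyMeasurable C (.of_forall hφC)
  have hsum : ∀ {φ : α → ℝ}, (∀ i, Integrable φ (ν.map S^[i])) →
      Integrable (birkhoffSum S φ N) ν := fun hφ =>
    integrable_finsetSum _ fun i _ => (hφ i).comp_measurable (hS.iterate i)
  have hψint := hint hψ hC
  have hψSint := hint (hψ.comp hS) fun x => hC (S x)
  have hbound : ∀ x, ‖birkhoffSum S (ψ ∘ S) N x - birkhoffSum S ψ N x‖ ≤ 2 * C := by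
    intro x
    have hshift : birkhoffSum S (ψ ∘ S) N x = birkhoffSum S ψ N (S x) := by
      simp only [birkhoffSum, Function.comp_apply, ← Function.iterate_succ_apply,
        ← Function.iterate_succ_apply']
    rw [hshift, birkhoffSum_apply_sub_birkhoffSum, two_mul]
    exact (norm_sub_le _ _).trans (add_le_add (hC _) (hC _))
  have hnorm := norm_integral_le_of_norm_le_const (μ := ν) (.of_forall hbound)
  rw [probReal_univ, mul_one] at hnorm
  calc ‖∫ x, (ψ ∘ S) x ∂(orbitAverage S ν N) - ∫ x, ψ x ∂(orbitAverage S ν N)‖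
      = ‖∫ x, (birkhoffSum S (ψ ∘ S) N x - birkhoffSum S ψ N x) ∂ν‖ / N := by
        rw [integral_orbitAverage hS hψSint, integral_orbitAverage hS hψint, ← sub_div, norm_div,
          Real.norm_natCast, integral_sub (hsum hψSint) (hsum hψint)]
    _ ≤ 2 * C / N := by gcongr

end OrbitAverage

section SkewProduct

open TopologicalSpace

variable {Ω X : Type*} {T : Ω → Ω} {g : Ω → X → X} {f : Ω × X → ℝ}

/-- The skew product over `T` with fibre maps `g ω`. -/
def skewProduct (T : Ω → Ω) (g : Ω → X → X) (p : Ω × X) : Ω × X := (T p.1, g p.1 p.2)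

/-- The fibrewise suprema of the Birkhoff sums of `f` under a map `S` of `Ω × X`, written
`F_n(ω)` in the literature. -/
noncomputable def birkhoffFiberSup (S : Ω × X → Ω × X) (f : Ω × X → ℝ) (n : ℕ) (ω : Ω) : ℝ :=
  ⨆ x, birkhoffSum S f n (ω, x)

lemma semiconj_fst_skewProduct (T : Ω → Ω) (g : Ω → X → X) :
    Function.Semiconj Prod.fst (skewProduct T g) T := fun _ => rfl

lemma fst_iterate_skewProduct (n : ℕ) (p : Ω × X) : ((skewProduct T g)^[n] p).1 = T^[n] p.1 :=
  (semiconj_fst_skewProduct T g).iterate_right n p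

variable [MeasurableSpace Ω] [MeasurableSpace X] {μ : Measure Ω}

lemma fst_map_iterate_skewProduct (hT : MeasurePreserving T μ μ)
    (hS : Measurable (skewProduct T g)) {ν : Measure (Ω × X)} (hν : ν.fst = μ) (n : ℕ) :
    (ν.map (skewProduct T g)^[n]).fst = μ := by
  rw [Measure.fst, Measure.map_map measurable_fst (hS.iterate n),
    ((semiconj_fst_skewProduct T g).iterate_right n).comp_eq,
    ← Measure.map_map (hT.measurable.iterate n) measurable_fst]
  exact hν ▸ (hT.iterate n).map_eq

lemma fst_orbitAverage_skewProduct (hT : MeasurePreserving T μ μ)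
    (hS : Measurable (skewProduct T g)) {ν : Measure (Ω × X)} (hν : ν.fst = μ) {N : ℕ}
    (hN : N ≠ 0) : (orbitAverage (skewProduct T g) ν N).fst = μ := by
  have hmap := map_orbitAverage (ν := ν) (N := N) hS hT.measurable measurable_fst
    (semiconj_fst_skewProduct T g)
  rw [← Measure.fst, ← Measure.fst, hν] at hmap
  exact hmap.trans (orbitAverage_eq_self hT hN)

variable [TopologicalSpace X]

namespace IsCaratheodoryIntegrand

lemma comp_skewProduct (hf : IsCaratheodoryIntegrand μ f) (hT : MeasurePreserving T μ μ)
    (hS : Measurable (skewProduct T g)) (hg : ∀ᵐ ω ∂μ, Continuous (g ω)) :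
    IsCaratheodoryIntegrand μ (f ∘ skewProduct T g) where
  measurable := hf.measurable.comp hS
  ae_continuous := by
    filter_upwards [hT.quasiMeasurePreserving.ae hf.ae_continuous, hg] with ω hfω hgω
      using hfω.comp hgω
  exists_bound := by
    obtain ⟨b, hb, hfb⟩ := hf.exists_bound
    refine ⟨b ∘ T, hT.integrable_comp_of_integrable hb, ?_⟩
    filter_upwards [hT.quasiMeasurePreserving.ae hfb] with ω hω x using hω _

lemma birkhoffSum_skewProduct (hf : IsCaratheodoryIntegrand μ f) (hT : MeasurePreserving T μ μ)
    (hS : Measurable (skewProduct T g)) (hg : ∀ᵐ ω ∂μ, Continuous (g ω)) (n : ℕ) :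
    IsCaratheodoryIntegrand μ (birkhoffSum (skewProduct T g) f n) := by
  induction n with
  | zero => exact birkhoffSum_zero' (skewProduct T g) f ▸ zero
  | succ n ih =>
    have hsucc : birkhoffSum (skewProduct T g) f (n + 1) =
        f + birkhoffSum (skewProduct T g) f n ∘ skewProduct T g :=
      funext (birkhoffSum_succ' (skewProduct T g) f n)
    exact hsucc ▸ hf.add (ih.comp_skewProduct hT hS hg)

lemma ae_birkhoffSum_le_birkhoffFiberSup [CompactSpace X] (hf : IsCaratheodoryIntegrand μ f)
    (hT : MeasurePreserving T μ μ) (hS : Measurable (skewProduct T g))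
    (hg : ∀ᵐ ω ∂μ, Continuous (g ω)) (n : ℕ) :
    ∀ᵐ ω ∂μ, ∀ x, birkhoffSum (skewProduct T g) f n (ω, x) ≤
      birkhoffFiberSup (skewProduct T g) f n ω :=
  (hf.birkhoffSum_skewProduct hT hS hg n).ae_le_iSup

lemma isSubadditiveCocycle_birkhoffFiberSup [CompactSpace X] [SeparableSpace X] [Nonempty X]
    (hf : IsCaratheodoryIntegrand μ f) (hT : MeasurePreserving T μ μ)
    (hS : Measurable (skewProduct T g)) (hg : ∀ᵐ ω ∂μ, Continuous (g ω)) :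
    IsSubadditiveCocycle T μ (birkhoffFiberSup (skewProduct T g) f) where
  integrable n := (hf.birkhoffSum_skewProduct hT hS hg n).integrable_iSup
  ae_add_le m n := by
    filter_upwards [hf.ae_birkhoffSum_le_birkhoffFiberSup hT hS hg m,
      (hT.iterate m).quasiMeasurePreserving.ae
        (hf.ae_birkhoffSum_le_birkhoffFiberSup hT hS hg n)] with ω hm hn
    refine ciSup_le fun x => ?_
    rw [birkhoffSum_add]
    exact add_le_add (hm x) (fst_iterate_skewProduct m (ω, x) ▸ hn _)

end IsCaratheodoryIntegrand

variable [CompactSpace X] [T2Space X] [SecondCountableTopology X] [BorelSpace X]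
  [IsProbabilityMeasure μ]

lemma isCompact_setOf_fst_eq [TopologicalSpace Ω] [PolishSpace Ω] [BorelSpace Ω] :
    IsCompact {η : ProbabilityMeasure (Ω × X) | (η : Measure (Ω × X)).fst = μ} := by
  let μ' : ProbabilityMeasure Ω := ⟨μ, inferInstance⟩
  have hclosed : IsClosed {η : ProbabilityMeasure (Ω × X) | (η : Measure (Ω × X)).fst = μ} := by
    have hset : {η : ProbabilityMeasure (Ω × X) | (η : Measure (Ω × X)).fst = μ} =
        (ProbabilityMeasure.map · measurable_fst.aemeasurable) ⁻¹' {μ'} := by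
      ext η
      rw [Set.mem_ofPred_eq, Set.mem_preimage, Set.mem_singleton_iff]
      exact (Subtype.ext_iff (a1 := η.map measurable_fst.aemeasurable) (a2 := μ')).symm
    rw [hset]
    exact isClosed_singleton.preimage (ProbabilityMeasure.continuous_map continuous_fst)
  rw [← hclosed.closure_eq]
  refine isCompact_closure_of_isTightMeasureSet (IsTightMeasureSet.prodMk ?_ .of_compactSpace)
  refine (isTightMeasureSet_singleton (μ := μ)).subset ?_
  rintro _ ⟨_, ⟨η, hη, rfl⟩, rfl⟩
  exact hη

lemma exists_measurePreserving_tendsto_integral_orbitAverage [StandardBorelSpace Ω]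
    (hT : MeasurePreserving T μ μ) (hS : Measurable (skewProduct T g))
    (hg : ∀ᵐ ω ∂μ, Continuous (g ω)) (ν : ℕ → Measure (Ω × X)) [∀ n, IsProbabilityMeasure (ν n)]
    (hν : ∀ n, (ν n).fst = μ) :
    ∃ η : Measure (Ω × X), IsProbabilityMeasure η ∧ MeasurePreserving (skewProduct T g) η η ∧
      η.fst = μ ∧ ∃ k : ℕ → ℕ, StrictMono k ∧ ∀ φ, IsCaratheodoryIntegrand μ φ →
        Tendsto (fun n => ∫ p, φ p ∂(orbitAverage (skewProduct T g) (ν (k n)) (k n + 1))) atTop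
          (𝓝 (∫ p, φ p ∂η)) := by
  let := upgradeStandardBorel Ω
  let A : ℕ → ProbabilityMeasure (Ω × X) := fun n =>
    ⟨orbitAverage (skewProduct T g) (ν n) (n + 1),
      isProbabilityMeasure_orbitAverage hS n.succ_ne_zero⟩
  have hA : ∀ n, (A n : Measure (Ω × X)).fst = μ := fun n =>
    fst_orbitAverage_skewProduct hT hS (hν n) n.succ_ne_zero
  obtain ⟨η, hη, k, hk, hlim⟩ := isCompact_setOf_fst_eq.tendsto_subseq hA
  have hint : ∀ φ, IsCaratheodoryIntegrand μ φ →
      Tendsto (fun n => ∫ p, φ p ∂(A (k n) : Measure (Ω × X))) atTop (𝓝 (∫ p, φ p ∂η)) :=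
    fun φ hφ => hφ.tendsto_integral hlim (fun n => hA (k n)) hη
  refine ⟨η, inferInstance, ⟨hS, ?_⟩, hη, k, hk, hint⟩
  have := Measure.isProbabilityMeasure_map (μ := (η : Measure (Ω × X))) hS.aemeasurable
  refine ext_of_forall_integral_eq_of_IsFiniteMeasure fun ψ => ?_
  have hψ : IsCaratheodoryIntegrand μ ψ := isCaratheodoryIntegrand_boundedContinuousFunction ψ
  have hdiff := (hint _ (hψ.comp_skewProduct hT hS hg)).sub (hint ψ hψ)
  have hzero : Tendsto (fun n => 2 * ‖ψ‖ / (k n + 1 : ℕ)) atTop (𝓝 0) :=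
    tendsto_const_nhds.div_atTop <| tendsto_natCast_atTop_atTop.comp <|
      (tendsto_add_atTop_nat 1).comp hk.tendsto_atTop
  rw [integral_map hS.aemeasurable hψ.measurable.aestronglyMeasurable, ← sub_eq_zero]
  refine tendsto_nhds_unique hdiff (squeeze_zero_norm (fun n => ?_) hzero)
  exact norm_integral_comp_sub_integral_orbitAverage_le hS hψ.measurable ψ.norm_coe_le_norm

/- Average near-maximizers of the `n`-th Birkhoff sums along orbits of length `n`. -/
theorem exists_measurePreserving_integral_birkhoffFiberSup_div_lt [StandardBorelSpace Ω]
    [Nonempty X] (hT : MeasurePreserving T μ μ) (hS : Measurable (skewProduct T g))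
    (hg : ∀ᵐ ω ∂μ, Continuous (g ω)) (hf : IsCaratheodoryIntegrand μ f) :
    ∃ η : Measure (Ω × X), IsProbabilityMeasure η ∧ MeasurePreserving (skewProduct T g) η η ∧
      η.fst = μ ∧ ∀ c, ∫ p, f p ∂η < c → ∃ n : ℕ, 0 < n ∧
        (∫ ω, birkhoffFiberSup (skewProduct T g) f n ω ∂μ) / n < c := by
  choose ν hνprob hνfst hνint using fun n : ℕ =>
    (hf.birkhoffSum_skewProduct hT hS hg (n + 1)).exists_measure_integral_iSup_sub_le one_pos
  obtain ⟨η, hη, hSη, hηfst, k, hk, hlim⟩ :=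
    exists_measurePreserving_tendsto_integral_orbitAverage hT hS hg ν hνfst
  refine ⟨η, hη, hSη, hηfst, fun c hc => ?_⟩
  have hone : Tendsto (fun n => (1 : ℝ) / (k n + 1 : ℕ)) atTop (𝓝 0) :=
    tendsto_const_nhds.div_atTop <| tendsto_natCast_atTop_atTop.comp <|
      (tendsto_add_atTop_nat 1).comp hk.tendsto_atTop
  have hlim' := (hlim f hf).add hone
  rw [add_zero] at hlim'
  obtain ⟨n, hn⟩ := (hlim'.eventually_lt_const hc).exists
  refine ⟨k n + 1, (k n).succ_pos, lt_of_le_of_lt ?_ hn⟩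
  rw [integral_orbitAverage hS fun i =>
    hf.integrable (fst_map_iterate_skewProduct hT hS (hνfst _) i), ← add_div]
  gcongr
  exact sub_le_iff_le_add.1 (hνint (k n))

end SkewProduct

theorem exists_maximizing_invariant_measure_skew_product_general
    {Ω : Type*} [MeasurableSpace Ω] [StandardBorelSpace Ω]
    {μ : Measure Ω} [IsProbabilityMeasure μ] {T : Ω → Ω} (hT : Ergodic T μ)
    {X : Type*} [TopologicalSpace X] [CompactSpace X] [T2Space X] [SecondCountableTopology X]
    [Nonempty X] [MeasurableSpace X] [BorelSpace X]
    {g : Ω → X → X} (hS : Measurable (skewProduct T g)) (hg : ∀ᵐ ω ∂μ, Continuous (g ω))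
    {f : Ω × X → ℝ} (hf : IsCaratheodoryIntegrand μ f) :
    IsSubadditiveCocycle T μ (birkhoffFiberSup (skewProduct T g) f) ∧
    ∃ η : Measure (Ω × X), IsProbabilityMeasure η ∧ MeasurePreserving (skewProduct T g) η η ∧
      η.fst = μ ∧ ∀ᵐ ω ∂μ, Tendsto
        (fun N : ℕ => birkhoffFiberSup (skewProduct T g) f N ω / N) atTop (𝓝 (∫ p, f p ∂η)) := by
  have hTμ := hT.toMeasurePreserving
  have hF := hf.isSubadditiveCocycle_birkhoffFiberSup hTμ hS hg
  obtain ⟨η, hη, hSη, hηfst, hsharp⟩ :=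
    exists_measurePreserving_integral_birkhoffFiberSup_div_lt hTμ hS hg hf
  have hfst : MeasurePreserving Prod.fst η μ := ⟨measurable_fst, hηfst⟩
  have hle : ∀ n, ∀ᵐ p ∂η, birkhoffSum (skewProduct T g) f n p ≤
      birkhoffFiberSup (skewProduct T g) f n p.1 := fun n =>
    (hfst.quasiMeasurePreserving.ae (hf.ae_birkhoffSum_le_birkhoffFiberSup hTμ hS hg n)).mono
      fun p hp => hp p.2
  exact ⟨hF, η, hη, hSη, hηfst,
    hF.ae_tendsto_div hT hSη hfst (hf.integrable hηfst) hle hsharp⟩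

/-- **Fibered maximizing invariant measures for subadditive Birkhoff suprema over skew
products.** -/
theorem exists_maximizing_invariant_measure_skew_product
    {Ω : Type*} [MeasurableSpace Ω] [StandardBorelSpace Ω]
    {μ : Measure Ω} [IsProbabilityMeasure μ]
    {T : Ω → Ω} (hT : Ergodic T μ)
    {X : Type*} [MetricSpace X] [CompactSpace X] [Nonempty X]
    [MeasurableSpace X] [BorelSpace X]
    (g : Ω → X → X)
    (hS : Measurable fun p : Ω × X => ((T p.1, g p.1 p.2) : Ω × X))
    (hhomeo : ∀ᵐ ω ∂μ, ∃ e : X ≃ₜ X, ⇑e = g ω)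
    (f : Ω × X → ℝ) (hfmeas : Measurable f)
    (hfcont : ∀ᵐ ω ∂μ, Continuous fun x => f (ω, x))
    (hfint : Integrable (fun ω => ⨆ x : X, |f (ω, x)|) μ) :
    (∀ n m : ℕ, 1 ≤ n → 1 ≤ m → ∀ᵐ ω ∂μ,
      (⨆ x : X, ∑ i ∈ Finset.range (n + m),
          f ((fun p : Ω × X => (T p.1, g p.1 p.2))^[i] (ω, x)))
        ≤ (⨆ x : X, ∑ i ∈ Finset.range n,
            f ((fun p : Ω × X => (T p.1, g p.1 p.2))^[i] (ω, x)))
          + (⨆ x : X, ∑ i ∈ Finset.range m,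
              f ((fun p : Ω × X => (T p.1, g p.1 p.2))^[i] (T^[n] ω, x)))) ∧
    ∃ l : ℝ,
      (∀ᵐ ω ∂μ,
        Tendsto
          (fun N : ℕ =>
            (⨆ x : X, ∑ i ∈ Finset.range N,
              f ((fun p : Ω × X => (T p.1, g p.1 p.2))^[i] (ω, x))) / (N : ℝ))
          atTop (𝓝 l)) ∧
      ∃ η : Measure (Ω × X), IsProbabilityMeasure η ∧
        MeasurePreserving (fun p : Ω × X => (T p.1, g p.1 p.2)) η η ∧
        η.map Prod.fst = μ ∧
        l ≤ ∫ p, f p ∂η := by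
  have hg : ∀ᵐ ω ∂μ, Continuous (g ω) := hhomeo.mono fun ω ⟨e, he⟩ => he ▸ e.continuous
  obtain ⟨hF, η, hη, hSη, hηfst, hlim⟩ := exists_maximizing_invariant_measure_skew_product_general
    hT hS hg (isCaratheodoryIntegrand_of_integrable_iSup_abs hfmeas hfcont hfint)
  exact ⟨fun n m _ _ => hF.ae_add_le n m, _, hlim, η, hη, hSη, hηfst, le_rfl⟩
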